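/- arXiv:1606.07576 — 2 statements merged into one kernel-verified Lean document; each statement's English description precedes it below -/
import Mathlib

section
/- Let ξ be a centered Gaussian random vector in ℝ^d with covariance matrix C, let A be a symmetric real d×d matrix, and set Θ(n) = E⟨ξ, Aξ⟩^n (with Θ(0) = 1) and R_j = Tr((AC)^j). Then for every n ≥ 1, Θ(n) = Σ_{j=1}^{n} 2^{j−1} (n−1)^{\underline{j−1}} R_j Θ(n−j), where a^{\underline{b}} = a(a−1)⋯(a−b+1) denotes the falling factorial. -/
open MeasureTheory ProbabilityTheory Filter Matrix

noncomputable section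

/-- `ξ` is a centered Gaussian random vector with covariance matrix `C`. -/
def IsCenteredGaussian {Ω : Type*} [MeasurableSpace Ω] (P : Measure Ω) {n : ℕ}
    (ξ : Ω → Fin n → ℝ) (C : Matrix (Fin n) (Fin n) ℝ) : Prop :=
  Measurable ξ ∧
    ∀ v : Fin n → ℝ,
      P.map (fun ω => v ⬝ᵥ ξ ω) = gaussianReal 0 (Real.toNNReal (v ⬝ᵥ C.mulVec v))


lemma gauss_int_pow (a : ℕ) : Integrable (fun x : ℝ => x ^ a) (gaussianReal 0 1) := by
  have h := (memLp_id_gaussianReal (μ := 0) (v := 1) (a : NNReal)).integrable_norm_pow'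
  refine (integrable_norm_iff (by fun_prop)).1 ?_
  simpa [norm_pow] using h

lemma gauss_int_pow_vol (a : ℕ) :
    Integrable (fun x : ℝ => gaussianPDFReal 0 1 x * x ^ a) := by
  have h := gauss_int_pow a
  rw [gaussianReal_of_var_ne_zero _ one_ne_zero,
    integrable_withDensity_iff_integrable_smul' (measurable_gaussianPDF _ _)
      (ae_of_all _ fun _ => gaussianPDF_lt_top)] at h
  simpa [toReal_gaussianPDF] using h

lemma gauss_moment (a : ℕ) :
    ∫ x, x ^ (a + 1) ∂(gaussianReal 0 1) = a * ∫ x, x ^ (a - 1) ∂(gaussianReal 0 1) := by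
  rw [integral_gaussianReal_eq_integral_smul one_ne_zero,
    integral_gaussianReal_eq_integral_smul one_ne_zero]
  simp only [smul_eq_mul]
  have hd : ∀ x : ℝ, HasDerivAt (fun x : ℝ => gaussianPDFReal 0 1 x * x ^ a)
      (a * (gaussianPDFReal 0 1 x * x ^ (a - 1)) - gaussianPDFReal 0 1 x * x ^ (a + 1)) x := by
    intro x
    have h1 : HasDerivAt (fun x : ℝ => gaussianPDFReal 0 1 x) (-x * gaussianPDFReal 0 1 x) x := by
      unfold gaussianPDFReal
      have h2 : HasDerivAt (fun x : ℝ => -(x - 0) ^ 2 / (2 * ((1 : NNReal) : ℝ))) (-x) x := by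
        have := (((hasDerivAt_id x).sub_const 0).pow 2).neg.div_const (2 * ((1 : NNReal) : ℝ))
        refine this.congr_deriv ?_
        simp
        ring
      refine (h2.exp.const_mul _).congr_deriv ?_
      ring
    refine (h1.mul (hasDerivAt_pow a x)).congr_deriv ?_
    ring
  have h := integral_eq_zero_of_hasDerivAt_of_integrable hd
    (((gauss_int_pow_vol _).const_mul _).sub (gauss_int_pow_vol _)) (gauss_int_pow_vol _)
  rw [integral_sub ((gauss_int_pow_vol _).const_mul _) (gauss_int_pow_vol _),
    integral_const_mul] at h
  linarith

/-- Standard Gaussian product measure. -/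
def stdG (d : ℕ) : Measure (Fin d → ℝ) := Measure.pi fun _ => gaussianReal 0 1

instance (d : ℕ) : IsProbabilityMeasure (stdG d) := by unfold stdG; infer_instance

lemma stdG_int_monomial {d : ℕ} (s : Fin d →₀ ℕ) (a : ℝ) :
    ∫ g, MvPolynomial.eval g (MvPolynomial.monomial s a) ∂(stdG d)
      = a * ∏ i, ∫ x, x ^ (s i) ∂(gaussianReal 0 1) := by
  simp only [MvPolynomial.eval_monomial]
  rw [integral_const_mul]
  congr 1
  rw [stdG, ← integral_fintype_prod_eq_prod (fun i (x : ℝ) => x ^ (s i))]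
  congr 1; ext g
  exact Finsupp.prod_fintype _ _ (by simp)

lemma stdG_integrable {d : ℕ} (p : MvPolynomial (Fin d) ℝ) :
    Integrable (fun g => MvPolynomial.eval g p) (stdG d) := by
  induction p using MvPolynomial.induction_on' with
  | monomial s a =>
    simp only [MvPolynomial.eval_monomial]
    refine Integrable.const_mul ?_ _
    have := Integrable.fintype_prod (f := fun i (x : ℝ) => x ^ (s i))
      (μ := fun _ : Fin d => gaussianReal 0 1) (fun i => gauss_int_pow _)
    refine this.congr (ae_of_all _ fun g => ?_)
    exact (Finsupp.prod_fintype _ _ (by simp)).symm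
  | add p q hp hq =>
    simp only [map_add]
    exact hp.add hq

lemma stdG_stein {d : ℕ} (i : Fin d) (p : MvPolynomial (Fin d) ℝ) :
    ∫ g, MvPolynomial.eval g (MvPolynomial.X i * p) ∂(stdG d)
      = ∫ g, MvPolynomial.eval g (MvPolynomial.pderiv i p) ∂(stdG d) := by
  induction p using MvPolynomial.induction_on' with
  | monomial s a =>
    rw [MvPolynomial.pderiv_monomial, MvPolynomial.X, MvPolynomial.monomial_mul,
      stdG_int_monomial, stdG_int_monomial, one_mul, mul_assoc]
    congr 1
    rw [← Finset.mul_prod_erase _ _ (Finset.mem_univ i),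
      ← Finset.mul_prod_erase _ _ (Finset.mem_univ i), ← mul_assoc]
    congr 1
    · have := gauss_moment (s i)
      simpa [add_comm] using this
    · refine Finset.prod_congr rfl fun j hj => ?_
      have hj' : j ≠ i := Finset.ne_of_mem_erase hj
      simp [Finsupp.single_apply, hj'.symm]
  | add p q hp hq =>
    simp only [mul_add, map_add]
    rw [integral_add (stdG_integrable _) (stdG_integrable _),
      integral_add (stdG_integrable _) (stdG_integrable _), hp, hq]

/-- The diagonal quadratic form. -/
def diagQ {d : ℕ} (l : Fin d → ℝ) : MvPolynomial (Fin d) ℝ :=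
  ∑ i, MvPolynomial.C (l i) * MvPolynomial.X i ^ 2

lemma pderiv_diagQ {d : ℕ} (l : Fin d → ℝ) (i : Fin d) :
    MvPolynomial.pderiv i (diagQ l) = MvPolynomial.C (2 * l i) * MvPolynomial.X i := by
  unfold diagQ
  rw [map_sum, Finset.sum_eq_single i]
  · have h2 : (MvPolynomial.C (2 : ℝ) : MvPolynomial (Fin d) ℝ) = 2 := map_ofNat _ 2
    simp [h2]; ring
  · intro j _ hj
    simp [MvPolynomial.pderiv_pow, MvPolynomial.pderiv_X_of_ne hj]
  · simp

lemma stdG_rec {d : ℕ} (l : Fin d → ℝ) (i : Fin d) (k : ℕ) :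
    ∫ g, MvPolynomial.eval g (MvPolynomial.X i ^ 2 * diagQ l ^ k) ∂(stdG d)
      = ∫ g, MvPolynomial.eval g (diagQ l ^ k) ∂(stdG d) +
        2 * k * l i *
          ∫ g, MvPolynomial.eval g (MvPolynomial.X i ^ 2 * diagQ l ^ (k - 1)) ∂(stdG d) := by
  rw [pow_two, mul_assoc, stdG_stein, ← integral_const_mul,
    ← integral_add (stdG_integrable _) ((stdG_integrable _).const_mul _)]
  congr 1; ext g
  simp only [MvPolynomial.pderiv_mul, MvPolynomial.pderiv_pow, pderiv_diagQ,
    MvPolynomial.pderiv_X_self]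
  simp
  ring

lemma stdG_rec_sum {d : ℕ} (l : Fin d → ℝ) (i : Fin d) (k : ℕ) :
    ∫ g, MvPolynomial.eval g (MvPolynomial.X i ^ 2 * diagQ l ^ k) ∂(stdG d)
      = ∑ j ∈ Finset.range (k + 1), (2 : ℝ) ^ j * (k.descFactorial j : ℝ) * l i ^ j *
        ∫ g, MvPolynomial.eval g (diagQ l ^ (k - j)) ∂(stdG d) := by
  induction k with
  | zero => rw [stdG_rec]; simp
  | succ k ih =>
    rw [stdG_rec, Nat.add_sub_cancel, ih, Finset.sum_range_succ' _ (k + 1), Finset.mul_sum,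
      add_comm]
    congr 1
    · refine Finset.sum_congr rfl fun j _ => ?_
      rw [Nat.succ_descFactorial_succ, Nat.add_sub_add_right]
      push_cast
      ring
    · simp

lemma stdG_main {d : ℕ} (l : Fin d → ℝ) (k : ℕ) :
    ∫ g, MvPolynomial.eval g (diagQ l ^ (k + 1)) ∂(stdG d)
      = ∑ j ∈ Finset.range (k + 1), (2 : ℝ) ^ j * (k.descFactorial j : ℝ) *
        (∑ i, l i ^ (j + 1)) *
        ∫ g, MvPolynomial.eval g (diagQ l ^ (k - j)) ∂(stdG d) := by
  have h : ∀ g, MvPolynomial.eval g (diagQ l ^ (k + 1)) =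
      ∑ i, l i * MvPolynomial.eval g (MvPolynomial.X i ^ 2 * diagQ l ^ k) := by
    intro g
    simp only [pow_succ (diagQ l) k, map_mul]
    conv_lhs => rw [mul_comm]; enter [1]; unfold diagQ
    simp [Finset.sum_mul, mul_assoc]
  simp only [h]
  rw [integral_finsetSum _ (fun i _ => (stdG_integrable _).const_mul _)]
  simp only [integral_const_mul, stdG_rec_sum, Finset.mul_sum, Finset.sum_mul]
  rw [Finset.sum_comm]
  refine Finset.sum_congr rfl fun j _ => Finset.sum_congr rfl fun i _ => ?_
  ring

lemma exists_diag {d : ℕ} (C A : Matrix (Fin d) (Fin d) ℝ) (hC : C.PosSemidef) (hA : A.IsSymm) :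
    ∃ (T : Matrix (Fin d) (Fin d) ℝ) (l : Fin d → ℝ),
      T * Tᵀ = C ∧ Tᵀ * A * T = diagonal l := by
  obtain ⟨S, hS⟩ : ∃ S : Matrix (Fin d) (Fin d) ℝ, S * Sᵀ = C := by
    have h := hC.1.spectral_theorem
    rw [Unitary.conjStarAlgAut_apply] at h
    set U : Matrix (Fin d) (Fin d) ℝ := (hC.1.eigenvectorUnitary : Matrix (Fin d) (Fin d) ℝ)
    refine ⟨U * diagonal (fun i => Real.sqrt (hC.1.eigenvalues i)), ?_⟩
    conv_rhs => rw [h]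
    rw [Matrix.transpose_mul, diagonal_transpose, Matrix.mul_assoc, ← Matrix.mul_assoc (diagonal _),
      diagonal_mul_diagonal]
    simp only [Real.mul_self_sqrt (hC.eigenvalues_nonneg _)]
    rw [Matrix.mul_assoc]
    rfl
  have hH : (Sᵀ * A * S).IsHermitian := by
    rw [Matrix.IsHermitian, conjTranspose_eq_transpose_of_trivial]
    simp [Matrix.transpose_mul, hA.eq, Matrix.mul_assoc]
  have h := hH.spectral_theorem
  rw [Unitary.conjStarAlgAut_apply] at h
  have h1 : (hH.eigenvectorUnitary : Matrix (Fin d) (Fin d) ℝ)ᵀ *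
      (hH.eigenvectorUnitary : Matrix (Fin d) (Fin d) ℝ) = 1 :=
    Unitary.coe_star_mul_self hH.eigenvectorUnitary
  have h2 : (hH.eigenvectorUnitary : Matrix (Fin d) (Fin d) ℝ) *
      (hH.eigenvectorUnitary : Matrix (Fin d) (Fin d) ℝ)ᵀ = 1 :=
    Unitary.coe_mul_star_self hH.eigenvectorUnitary
  have h3 : Sᵀ * A * S = (hH.eigenvectorUnitary : Matrix (Fin d) (Fin d) ℝ) *
    diagonal hH.eigenvalues * (hH.eigenvectorUnitary : Matrix (Fin d) (Fin d) ℝ)ᵀ := h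
  generalize (hH.eigenvectorUnitary : Matrix (Fin d) (Fin d) ℝ) = U at h1 h2 h3
  generalize hH.eigenvalues = e at h3
  refine ⟨S * U, e, ?_, ?_⟩
  · rw [Matrix.transpose_mul, Matrix.mul_assoc, ← Matrix.mul_assoc U, h2, Matrix.one_mul, hS]
  · calc (S * U)ᵀ * A * (S * U) = Uᵀ * (Sᵀ * A * S) * U := by
          simp [Matrix.transpose_mul, Matrix.mul_assoc]
      _ = (Uᵀ * U) * diagonal e * (Uᵀ * U) := by
          rw [h3]; simp only [Matrix.mul_assoc]
      _ = _ := by rw [h1]; simp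

lemma trace_pow_eq {d : ℕ} (T A : Matrix (Fin d) (Fin d) ℝ) (l : Fin d → ℝ)
    (h : Tᵀ * A * T = diagonal l) (j : ℕ) :
    trace ((A * (T * Tᵀ)) ^ (j + 1)) = ∑ i, l i ^ (j + 1) := by
  have key : ∀ j : ℕ, (A * (T * Tᵀ)) ^ (j + 1) = A * T * (Tᵀ * A * T) ^ j * Tᵀ := by
    intro j
    induction j with
    | zero => simp [Matrix.mul_assoc]
    | succ j ih => rw [pow_succ, ih, pow_succ (Tᵀ * A * T)]; simp only [Matrix.mul_assoc]
  rw [key, trace_mul_comm, ← Matrix.mul_assoc, ← Matrix.mul_assoc, ← pow_succ', h,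
    diagonal_pow, trace_diagonal]
  simp

lemma law_eq {Ω : Type*} [MeasurableSpace Ω] (P : Measure Ω) [IsProbabilityMeasure P]
    {d : ℕ} (ξ : Ω → Fin d → ℝ) (C T : Matrix (Fin d) (Fin d) ℝ)
    (hξ : IsCenteredGaussian P ξ C) (hT : T * Tᵀ = C) :
    P.map ξ = (stdG d).map (fun g => T *ᵥ g) := by
  obtain ⟨hm, hg⟩ := hξ
  have hTm : Measurable (fun g : Fin d → ℝ => T *ᵥ g) :=
    (Continuous.matrix_mulVec continuous_const continuous_id).measurable
  have := Measure.isProbabilityMeasure_map (μ := P) hm.aemeasurable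
  have := Measure.isProbabilityMeasure_map (μ := stdG d) hTm.aemeasurable
  apply Measure.ext_of_charFunDual
  ext L
  set v : Fin d → ℝ := fun i => L (Pi.single i 1) with hv
  have hL : ∀ x, L x = v ⬝ᵥ x := by
    intro x
    conv_lhs => rw [pi_eq_sum_univ' x]
    simp [dotProduct, hv, mul_comm]
  have hvar : v ⬝ᵥ C *ᵥ v = ∑ i, (v ᵥ* T) i ^ 2 := by
    rw [← hT, ← mulVec_mulVec, dotProduct_mulVec, mulVec_transpose]
    simp [dotProduct, pow_two]
  have h1 : charFunDual (P.map ξ) L = Complex.exp (-(∑ i, (v ᵥ* T) i ^ 2 : ℝ) / 2) := by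
    rw [charFunDual_eq_charFun_map_one, Measure.map_map (by fun_prop) hm]
    have : (L ∘ ξ) = fun ω => v ⬝ᵥ ξ ω := by ext ω; simp [hL]
    rw [this, hg, charFun_gaussianReal, hvar, Real.coe_toNNReal _ (by positivity)]
    simp
    ring_nf
  rw [h1, charFunDual_apply, integral_map hTm.aemeasurable (by fun_prop)]
  simp only [hL, dotProduct_mulVec]
  have h2 : ∀ g : Fin d → ℝ, Complex.exp (((v ᵥ* T ⬝ᵥ g : ℝ) : ℂ) * Complex.I) =
      ∏ i, Complex.exp (((v ᵥ* T) i : ℝ) * (g i : ℝ) * Complex.I) := by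
    intro g
    rw [← Complex.exp_sum, dotProduct, Complex.ofReal_sum, Finset.sum_mul]
    simp
  simp only [h2]
  rw [stdG, integral_fintype_prod_eq_prod
    (fun i (x : ℝ) => Complex.exp (((v ᵥ* T) i : ℝ) * (x : ℝ) * Complex.I))]
  simp only [← charFun_apply_real, charFun_gaussianReal]
  rw [← Complex.exp_sum]
  congr 1
  simp [Finset.sum_div, neg_div, Finset.sum_neg_distrib]

theorem stmt11 {Ω : Type*} [MeasurableSpace Ω] (P : Measure Ω) [IsProbabilityMeasure P]
    {d : ℕ} (ξ : Ω → Fin d → ℝ) (C A : Matrix (Fin d) (Fin d) ℝ)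
    (hC : C.PosSemidef) (hA : A.IsSymm)
    (hξ : IsCenteredGaussian P ξ C)
    (hint : ∀ k : ℕ, Integrable (fun ω => (ξ ω ⬝ᵥ A.mulVec (ξ ω)) ^ k) P)
    (n : ℕ) (hn : 1 ≤ n) :
    (∫ ω, (ξ ω ⬝ᵥ A.mulVec (ξ ω)) ^ n ∂P) =
      ∑ j ∈ Finset.Icc 1 n,
        (2 : ℝ) ^ (j - 1) * ((n - 1).descFactorial (j - 1) : ℝ) *
          Matrix.trace ((A * C) ^ j) *
          ∫ ω, (ξ ω ⬝ᵥ A.mulVec (ξ ω)) ^ (n - j) ∂P := by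
  obtain ⟨T, l, hT, hl⟩ := exists_diag C A hC hA
  have hlaw := law_eq P ξ C T hξ hT
  have hTm : Measurable (fun g : Fin d → ℝ => T *ᵥ g) :=
    (Continuous.matrix_mulVec continuous_const continuous_id).measurable
  have hQ : ∀ k : ℕ, ∫ ω, (ξ ω ⬝ᵥ A.mulVec (ξ ω)) ^ k ∂P =
      ∫ g, MvPolynomial.eval g (diagQ l ^ k) ∂(stdG d) := by
    intro k
    have hc : Continuous (fun x : Fin d → ℝ => (x ⬝ᵥ A *ᵥ x) ^ k) :=
      (Continuous.dotProduct continuous_id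
        (Continuous.matrix_mulVec continuous_const continuous_id)).pow k
    rw [← integral_map (f := fun x : Fin d → ℝ => (x ⬝ᵥ A *ᵥ x) ^ k) hξ.1.aemeasurable
      hc.aestronglyMeasurable, hlaw, integral_map hTm.aemeasurable hc.aestronglyMeasurable]
    congr 1; ext g
    rw [map_pow]
    congr 1
    have : T *ᵥ g ⬝ᵥ A *ᵥ T *ᵥ g = g ⬝ᵥ (Tᵀ * A * T) *ᵥ g := by
      rw [Matrix.mul_assoc, ← mulVec_mulVec, dotProduct_mulVec g, vecMul_transpose,
        mulVec_mulVec]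
    rw [this, hl]
    simp only [dotProduct, mulVec_diagonal, diagQ, map_sum, map_mul, map_pow, MvPolynomial.eval_C,
      MvPolynomial.eval_X]
    exact Finset.sum_congr rfl fun i _ => by ring
  obtain ⟨k, rfl⟩ : ∃ k, n = k + 1 := ⟨n - 1, by omega⟩
  simp only [hQ]
  rw [stdG_main, Finset.range_eq_Ico, ← Finset.Ico_add_one_right_eq_Icc,
    ← Finset.sum_Ico_add' _ 0 (k + 1) 1]
  refine Finset.sum_congr rfl fun j _ => ?_
  rw [← trace_pow_eq T A l hl j, hT]
  simp only [Nat.add_sub_cancel, Nat.add_sub_add_right]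
end
end

section
/- Let ξ be a centered Gaussian random vector in ℝ^d with covariance matrix C, let A be a symmetric real d×d matrix, and set Θ(n) = E⟨ξ, Aξ⟩^n (with Θ(0) = 1) and R_j = Tr((AC)^j). Then for every N ≥ 1, Σ_{n=0}^{N} C(N,n) (−1)^{N−n} Θ(n) R_1^{N−n} = Σ_{m=1}^{N} 2^{N−m} Σ_{k ∈ J_0(m,N)} c(k) Π_{j=1}^{m} R_{k_j}, where C(N,n) is the binomial coefficient, J_0(m,N) is the set of m-tuples k = (k_1,…,k_m) of integers with each k_j ≥ 2 and k_1 + ⋯ + k_m = N, and c(k) = (N−1)! / Π_{j=2}^{m} (N − s_{j−1}(k)) with s_j(k) = k_1 + ⋯ + k_j. (The left-hand side equals the central moment E(⟨ξ, Aξ⟩ − E⟨ξ, Aξ⟩)^N.) -/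
open MeasureTheory ProbabilityTheory Filter Matrix

noncomputable section

/-- Partial sum `s_j(k) = k_1 + ⋯ + k_j` (1-based; sums the first `j` entries). -/
def psum {m : ℕ} (k : Fin m → ℕ) (j : ℕ) : ℕ :=
  ∑ i ∈ Finset.univ.filter (fun i : Fin m => (i : ℕ) < j), k i

/-- `J_0(m,N)`: `m`-tuples of integers, each `≥ 2`, summing to `N`. -/
def J0 (m N : ℕ) : Finset (Fin m → ℕ) :=
  (Finset.Nat.antidiagonalTuple m N).filter fun k => ∀ j, 2 ≤ k j

/-- The combinatorial constant `c(k) = (N-1)! / ∏_{j=2}^{m} (N - s_{j-1}(k))`. -/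
def cconst (N : ℕ) {m : ℕ} (k : Fin m → ℕ) : ℝ :=
  ((N - 1).factorial : ℝ) / ∏ j ∈ Finset.Icc 2 m, ((N : ℝ) - psum k (j - 1))

lemma mem_J0 {m N : ℕ} {k : Fin m → ℕ} : k ∈ J0 m N ↔ ∑ i, k i = N ∧ ∀ j, 2 ≤ k j := by
  simp [J0, Finset.Nat.mem_antidiagonalTuple]

lemma psum_cons {m : ℕ} (a : ℕ) (k : Fin m → ℕ) (j : ℕ) :
    psum (Fin.cons a k : Fin (m+1) → ℕ) (j + 1) = a + psum k j := by
  simp [psum, Finset.sum_filter, Fin.sum_univ_succ]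

lemma psum_zero {m : ℕ} (k : Fin m → ℕ) : psum k 0 = 0 := by simp [psum]

lemma cconst_cons {m N a : ℕ} (k : Fin m → ℕ) (ha : 2 ≤ a) (haN : a ≤ N)
    (hk : k ∈ J0 m (N - a)) :
    cconst N (Fin.cons a k : Fin (m+1) → ℕ) =
      ((N-1).factorial : ℝ) / ((N - a).factorial : ℝ) * cconst (N - a) k := by
  rw [mem_J0] at hk
  rcases Nat.eq_zero_or_pos m with rfl | hm
  · have : N - a = 0 := by simpa using hk.1.symm
    simp [cconst, this]
  have hpos : 0 < N - a := by
    rw [← hk.1]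
    have := hk.2 ⟨0, hm⟩
    have h2 := Finset.single_le_sum (f := k) (fun i _ => Nat.zero_le _) (Finset.mem_univ ⟨0, hm⟩)
    omega
  obtain ⟨n, hn⟩ : ∃ n, N - a = n + 1 := ⟨N - a - 1, by omega⟩
  have hNa : (N : ℝ) = a + (n + 1) := by
    have : N = a + (n + 1) := by omega
    exact_mod_cast this
  unfold cconst
  have hprod : ∏ j ∈ Finset.Icc 2 (m+1), ((N : ℝ) - psum (Fin.cons a k : Fin (m+1) → ℕ) (j - 1))
      = ((N - a : ℕ) : ℝ) * ∏ j ∈ Finset.Icc 2 m, (((N - a : ℕ) : ℝ) - psum k (j - 1)) := by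
    have e1 : Finset.Icc 2 (m+1) = Finset.Ico 2 (m+2) := by ext; simp <;> omega
    have e2 : Finset.Icc 2 m = Finset.Ico 2 (m+1) := by ext; simp
    rw [e1, e2, Finset.prod_eq_prod_Ico_succ_bot (by omega), ← Finset.prod_Ico_add' _ 2 (m+1) 1]
    congr 1
    · rw [show 2 - 1 = 0 + 1 from rfl, psum_cons, psum_zero, hn, hNa]; push_cast; ring
    · refine Finset.prod_congr rfl fun j hj => ?_
      have hj2 := (Finset.mem_Ico.1 hj).1
      rw [show j + 1 - 1 = (j - 1) + 1 by omega, psum_cons, hn, hNa]; push_cast; ring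
  rw [hprod, hn, Nat.factorial_succ, show n + 1 - 1 = n by omega]
  have : (n.factorial : ℝ) ≠ 0 := by positivity
  have h3 : ((n : ℝ) + 1) ≠ 0 := by positivity
  push_cast
  rw [div_mul_div_comm]
  rw [show ((n : ℝ) + 1) * n.factorial * ∏ j ∈ Finset.Icc 2 m, ((n : ℝ) + 1 - psum k (j - 1)) =
    (((n : ℝ) + 1) * ∏ j ∈ Finset.Icc 2 m, ((n : ℝ) + 1 - psum k (j - 1))) * n.factorial by ring]
  rw [mul_div_mul_right _ _ this]

def HH (R : ℕ → ℝ) (m N : ℕ) : ℝ := ∑ k ∈ J0 m N, cconst N k * ∏ j : Fin m, R (k j)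

lemma HH_succ (R : ℕ → ℝ) (m N : ℕ) :
    HH R (m+1) N = ∑ a ∈ Finset.Icc 2 N,
      ((N-1).factorial : ℝ) / ((N - a).factorial : ℝ) * R a * HH R m (N - a) := by
  unfold HH
  simp_rw [Finset.mul_sum]
  rw [Finset.sum_sigma']
  symm
  refine Finset.sum_bij' (fun x _ => (Fin.cons x.1 x.2 : Fin (m+1) → ℕ))
    (fun k _ => ⟨k 0, Fin.tail k⟩) ?_ ?_ ?_ ?_ ?_
  · rintro ⟨a, k⟩ h
    simp only [Finset.mem_sigma, Finset.mem_Icc, mem_J0] at h ⊢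
    refine ⟨?_, ?_⟩
    · rw [Fin.sum_univ_succ]; simp [h.2.1]; omega
    · intro j
      refine Fin.cases ?_ (fun i => ?_) j
      · simpa using h.1.1
      · simpa using h.2.2 i
  · intro k h
    simp only [Finset.mem_sigma, Finset.mem_Icc, mem_J0] at h ⊢
    rw [Fin.sum_univ_succ] at h
    refine ⟨⟨h.2 0, by omega⟩, ?_, fun j => h.2 _⟩
    simp only [Fin.tail]; omega
  · rintro ⟨a, k⟩ h
    simp
  · intro k h
    simp
  · rintro ⟨a, k⟩ h
    simp only [Finset.mem_sigma, Finset.mem_Icc] at h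
    simp only []
    rw [cconst_cons k h.1.1 h.1.2 h.2, Fin.prod_univ_succ]
    simp
    ring

lemma HH_of_lt (R : ℕ → ℝ) {m N : ℕ} (h : N < m) : HH R m N = 0 := by
  unfold HH
  refine Finset.sum_eq_zero fun k hk => ?_
  rw [mem_J0] at hk
  have : ∑ i : Fin m, 1 ≤ ∑ i, k i := Finset.sum_le_sum fun i _ => by have := hk.2 i; omega
  simp at this
  omega

lemma HH_zero_zero (R : ℕ → ℝ) : HH R 0 0 = 1 := by
  simp [HH, J0, cconst]

lemma HH_zero_pos (R : ℕ → ℝ) {N : ℕ} (h : 1 ≤ N) : HH R 0 N = 0 := by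
  unfold HH
  refine Finset.sum_eq_zero fun k hk => ?_
  rw [mem_J0] at hk
  simp at hk
  omega

def GG (R : ℕ → ℝ) (N : ℕ) : ℝ := ∑ m ∈ Finset.range (N+1), (2 : ℝ) ^ (N - m) * HH R m N

lemma GG_zero (R : ℕ → ℝ) : GG R 0 = 1 := by simp [GG, HH_zero_zero]

lemma GG_succ (R : ℕ → ℝ) (n : ℕ) : GG R (n+1) = ∑ i ∈ Finset.range n,
    (2 : ℝ) ^ (i+1) * ((n.factorial : ℝ) / ((n - 1 - i).factorial : ℝ)) * R (i+2) *
      GG R (n - 1 - i) := by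
  have e : Finset.Icc 2 (n+1) = Finset.Ico (0+2) (n+2) := by ext; simp <;> omega
  rw [GG, Finset.sum_range_succ', HH_zero_pos R (by omega), mul_zero, add_zero]
  simp_rw [HH_succ, Finset.mul_sum]
  rw [Finset.sum_comm, e, ← Finset.sum_Ico_add', Nat.Ico_zero_eq_range]
  refine Finset.sum_congr rfl fun i hi => ?_
  have hi := Finset.mem_range.1 hi
  rw [GG, Finset.mul_sum]
  rw [show n + 1 - (i + 2) = n - 1 - i by omega, show n + 1 - 1 = n by omega]
  symm
  refine Finset.sum_subset_zero_on_sdiff (Finset.range_mono (by omega)) ?_ ?_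
  · intro m hm
    simp only [Finset.mem_sdiff, Finset.mem_range] at hm
    rw [HH_of_lt R (by omega)]; simp
  · intro m hm
    have := Finset.mem_range.1 hm
    rw [show n + 1 - (m + 1) = (i + 1) + (n - 1 - i - m) by omega, pow_add]
    ring

open scoped MatrixOrder in
lemma exists_law {Ω : Type*} [MeasurableSpace Ω] (P : Measure Ω) [IsProbabilityMeasure P]
    {d : ℕ} (ξ : Ω → Fin d → ℝ) (C : Matrix (Fin d) (Fin d) ℝ)
    (hC : C.PosSemidef) (hξ : IsCenteredGaussian P ξ C) :
    ∃ S : Matrix (Fin d) (Fin d) ℝ, Sᵀ = S ∧ S * S = C ∧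
      P.map ξ = (Measure.pi (fun _ : Fin d => gaussianReal 0 1)).map (fun x => S *ᵥ x) := by
  classical
  obtain ⟨hm, hg⟩ := hξ
  have hlaw : P.map (fun ω => WithLp.toLp 2 (ξ ω)) = multivariateGaussian 0 C := by
    have : IsProbabilityMeasure (P.map (fun ω => WithLp.toLp 2 (ξ ω))) :=
      Measure.isProbabilityMeasure_map (by fun_prop)
    apply Measure.ext_of_charFun
    ext t
    rw [charFun_multivariateGaussian hC, charFun_apply, integral_map (by fun_prop) (by fun_prop)]
    have h1 := congrArg (fun μ => charFun μ 1) (hg t.ofLp)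
    simp only [charFun_gaussianReal] at h1
    rw [charFun_apply_real, integral_map (by fun_prop) (by fun_prop)] at h1
    have hnn : 0 ≤ t.ofLp ⬝ᵥ C *ᵥ t.ofLp := by simpa using hC.dotProduct_mulVec_nonneg t.ofLp
    rw [Real.coe_toNNReal _ hnn] at h1
    convert h1 using 3
    · simp [PiLp.inner_apply, dotProduct]
    · simp
    · simp
  refine ⟨CFC.sqrt C, ?_, ?_, ?_⟩
  · have h : (CFC.sqrt C).IsHermitian := (CFC.sqrt_nonneg C).isSelfAdjoint
    simpa [IsHermitian, conjTranspose_eq_transpose_of_trivial] using h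
  · exact CFC.sqrt_mul_sqrt_self C (ha := hC.nonneg)
  · have h2 := congrArg (fun μ => Measure.map (WithLp.ofLp) μ) hlaw
    simp only [multivariateGaussian, ← map_pi_eq_stdGaussian] at h2
    rw [Measure.map_map (by fun_prop) (by fun_prop), Measure.map_map (by fun_prop) (by fun_prop),
      Measure.map_map (by fun_prop) (by fun_prop)] at h2
    have e : (fun x => CFC.sqrt C *ᵥ x) = (WithLp.ofLp ∘ fun x : EuclideanSpace ℝ (Fin d) =>
        0 + (toEuclideanCLM (𝕜 := ℝ) (CFC.sqrt C)) x) ∘ WithLp.toLp 2 := by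
      funext x
      simp
    rw [e]
    exact h2

lemma integrable_pow_gauss (k : ℕ) : Integrable (fun x : ℝ => x ^ k) (gaussianReal 0 1) := by
  have := (memLp_id_gaussianReal (μ := 0) (v := 1) k).integrable_norm_pow'
  refine this.mono' (by fun_prop) ?_
  simp

lemma stein1 (k : ℕ) : ∫ x, x ^ (k+1) ∂(gaussianReal 0 1) =
    k * ∫ x, x ^ (k-1) ∂(gaussianReal 0 1) := by
  have hi : ∀ k : ℕ, Integrable (fun x : ℝ => gaussianPDFReal 0 1 x * x ^ k) := by
    intro k
    have := integrable_pow_gauss k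
    rw [gaussianReal_of_var_ne_zero _ one_ne_zero, gaussianPDF_def,
      integrable_withDensity_iff_integrable_smul' (by fun_prop) (by simp)] at this
    simpa [ENNReal.toReal_ofReal, gaussianPDFReal_nonneg] using this
  rw [integral_gaussianReal_eq_integral_smul one_ne_zero,
    integral_gaussianReal_eq_integral_smul one_ne_zero]
  simp only [smul_eq_mul]
  have hd : ∀ x : ℝ, HasDerivAt (gaussianPDFReal 0 1) (-(gaussianPDFReal 0 1 x * x)) x := by
    intro x
    have h1 : HasDerivAt (fun x : ℝ => -(x - 0)^2 / (2 * ((1 : NNReal) : ℝ))) (-x) x := by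
      have := ((hasDerivAt_pow 2 x).neg.div_const 2)
      have e1 : (fun x : ℝ => -(x - 0)^2 / (2 * ((1 : NNReal) : ℝ))) =
        (fun x => (-fun x : ℝ => x ^ 2) x / 2) := by funext y; simp
      rw [e1]
      refine this.congr_deriv ?_
      simp
      ring
    have h2 := (h1.exp.const_mul (√(2 * Real.pi * ((1 : NNReal) : ℝ)))⁻¹)
    refine h2.congr_deriv ?_
    simp only [gaussianPDFReal]
    ring
  have := integral_mul_deriv_eq_deriv_mul_of_integrable (u := fun x : ℝ => x ^ k)
    (u' := fun x : ℝ => k * x ^ (k-1)) (v := gaussianPDFReal 0 1)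
    (v' := fun x => -(gaussianPDFReal 0 1 x * x)) (fun x _ => hasDerivAt_pow k x) (fun x _ => hd x)
    ((hi (k+1)).neg.congr (Eventually.of_forall fun x => by simp only [Pi.mul_apply, Pi.neg_apply]; ring))
    (((hi (k-1)).const_mul (k:ℝ)).congr (Eventually.of_forall fun x => by simp only [Pi.mul_apply]; ring))
    ((hi k).congr (Eventually.of_forall fun x => by simp only [Pi.mul_apply]; ring))
  rw [← integral_const_mul]
  have h3 : ∀ x : ℝ, gaussianPDFReal 0 1 x * x ^ (k+1) =
    - (x ^ k * -(gaussianPDFReal 0 1 x * x)) := fun x => by ring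
  simp_rw [h3]
  rw [integral_neg, this, neg_neg]
  congr 1
  ext x; ring

abbrev gam (d : ℕ) : Measure (Fin d → ℝ) := Measure.pi (fun _ : Fin d => gaussianReal 0 1)

lemma integrable_eval {d : ℕ} (p : MvPolynomial (Fin d) ℝ) :
    Integrable (fun x => MvPolynomial.eval x p) (gam d) := by
  induction p using MvPolynomial.induction_on' with
  | monomial s a =>
    simp only [MvPolynomial.eval_monomial, Finsupp.prod_fintype _ _ (fun _ => pow_zero _)]
    exact (Integrable.fintype_prod (f := fun i (x : ℝ) => x ^ (s i))
      (fun i => integrable_pow_gauss _)).const_mul a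
  | add p q hp hq => simp only [map_add]; exact hp.add hq

def LL (d : ℕ) : MvPolynomial (Fin d) ℝ →ₗ[ℝ] ℝ where
  toFun p := ∫ x, MvPolynomial.eval x p ∂(gam d)
  map_add' p q := by
    simp only [map_add]; exact integral_add (integrable_eval p) (integrable_eval q)
  map_smul' a p := by
    simp only [MvPolynomial.smul_eval, RingHom.id_apply, smul_eq_mul]
    exact integral_const_mul _ _

lemma LL_apply {d : ℕ} (p : MvPolynomial (Fin d) ℝ) :
  LL d p = ∫ x, MvPolynomial.eval x p ∂(gam d) := rfl

lemma LL_monomial {d : ℕ} (s : Fin d →₀ ℕ) (a : ℝ) :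
    LL d (MvPolynomial.monomial s a) = a * ∏ i, ∫ x, x ^ (s i) ∂(gaussianReal 0 1) := by
  rw [LL_apply]
  simp only [MvPolynomial.eval_monomial, Finsupp.prod_fintype _ _ (fun _ => pow_zero _)]
  rw [integral_const_mul, integral_fintype_prod_eq_prod (f := fun i (x : ℝ) => x ^ (s i))]

lemma LL_stein {d : ℕ} (i : Fin d) (p : MvPolynomial (Fin d) ℝ) :
    LL d (MvPolynomial.X i * p) = LL d (MvPolynomial.pderiv i p) := by
  induction p using MvPolynomial.induction_on' with
  | monomial s a =>
    rw [MvPolynomial.pderiv_monomial, MvPolynomial.X, MvPolynomial.monomial_mul, LL_monomial,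
      LL_monomial, ← Finset.mul_prod_erase _ _ (Finset.mem_univ i),
      ← Finset.mul_prod_erase (a := i) _ (fun j => ∫ x, x ^ ((s - Finsupp.single i 1 : Fin d →₀ ℕ) j) ∂(gaussianReal 0 1))
        (Finset.mem_univ i)]
    have h : ∀ j ∈ Finset.univ.erase i, (∫ x : ℝ, x ^ ((Finsupp.single i 1 + s : Fin d →₀ ℕ) j) ∂(gaussianReal 0 1))
      = ∫ x, x ^ ((s - Finsupp.single i 1 : Fin d →₀ ℕ) j) ∂(gaussianReal 0 1) := by
      intro j hj
      have : i ≠ j := (Finset.ne_of_mem_erase hj).symm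
      simp [Finsupp.single_apply, this]
    rw [Finset.prod_congr rfl h]
    have h2 : (Finsupp.single i 1 + s : Fin d →₀ ℕ) i = s i + 1 := by simp [add_comm]
    have h3 : (s - Finsupp.single i 1 : Fin d →₀ ℕ) i = s i - 1 := by simp
    rw [h2, h3, stein1]
    ring
  | add p q hp hq => simp [mul_add, hp, hq]

open MvPolynomial in
def qf {d : ℕ} (D : Matrix (Fin d) (Fin d) ℝ) : MvPolynomial (Fin d) ℝ :=
  ∑ i, ∑ j, X i * (C (D i j) * X j)

open MvPolynomial in
lemma pderiv_qf {d : ℕ} (B : Matrix (Fin d) (Fin d) ℝ) (hB : Bᵀ = B) (i : Fin d) :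
    pderiv i (qf B) = 2 * ∑ k, C (B i k) * X k := by
  have hs : ∀ k, B k i = B i k := fun k => congrFun (congrFun hB i) k
  simp only [qf, map_sum, Derivation.leibniz, pderiv_X, pderiv_C, smul_eq_mul, mul_zero, add_zero,
    Pi.single_apply]
  simp only [mul_ite, mul_one, mul_zero, Finset.sum_add_distrib, Finset.sum_ite_eq,
    Finset.sum_ite_eq', Finset.mem_univ, if_true, Finset.sum_ite_irrel, Finset.sum_const_zero]
  simp only [hs, two_mul]
  congr 1
  all_goals (refine Finset.sum_congr rfl fun k _ => ?_; ring)

open MvPolynomial in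
lemma eval_qf {d : ℕ} (B : Matrix (Fin d) (Fin d) ℝ) (x : Fin d → ℝ) :
    eval x (qf B) = x ⬝ᵥ B *ᵥ x := by
  simp [qf, dotProduct, mulVec, Finset.mul_sum]

open MvPolynomial in
lemma LL_rec {d : ℕ} (B : Matrix (Fin d) (Fin d) ℝ) (hB : Bᵀ = B) (r : ℝ) (p n : ℕ) :
    LL d (qf (B^p) * (qf B - C r)^n) = (B^p).trace * LL d ((qf B - C r)^n) +
      2 * n * LL d (qf (B^(p+1)) * (qf B - C r)^(n-1)) := by
  set Y := qf B - C r with hY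
  have h1 : qf (B^p) * Y^n = ∑ i, X i * (∑ j, C ((B^p) i j) * X j * Y^n) := by
    simp only [qf, Finset.sum_mul, Finset.mul_sum]
    refine Finset.sum_congr rfl fun i _ => Finset.sum_congr rfl fun j _ => by ring
  have h2 : ∀ i, pderiv i (∑ j, C ((B^p) i j) * X j * Y^n) =
      C ((B^p) i i) * Y^n + C (2 * n : ℝ) *
        ((∑ j, ∑ k, X j * (C ((B^p) i j * B i k) * X k)) * Y^(n-1)) := by
    intro i
    have hYd : pderiv i Y = 2 * ∑ k, C (B i k) * X k := by
      rw [hY, map_sub, pderiv_qf B hB, pderiv_C, sub_zero]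
    simp only [map_sum, Derivation.leibniz, Derivation.leibniz_pow, hYd, pderiv_X, pderiv_C,
      smul_eq_mul, mul_zero, add_zero, Pi.single_apply, mul_ite, mul_one, Finset.sum_add_distrib,
      Finset.sum_ite_eq, Finset.sum_ite_eq', Finset.mem_univ, if_true]
    rw [add_comm]
    congr 1
    · ring
    · simp only [nsmul_eq_mul, Finset.sum_mul, Finset.mul_sum, map_mul, map_ofNat, map_natCast]
      refine Finset.sum_congr rfl fun j _ => Finset.sum_congr rfl fun k _ => by ring
  have hsym : (B^p)ᵀ = B^p := by rw [transpose_pow, hB]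
  have h3 : ∑ i, ∑ j, ∑ k, X j * (C ((B^p) i j * B i k) * X k) = qf (B^(p+1)) := by
    rw [Finset.sum_comm]
    unfold qf
    refine Finset.sum_congr rfl fun j _ => ?_
    rw [Finset.sum_comm]
    refine Finset.sum_congr rfl fun k _ => ?_
    rw [pow_succ, mul_apply, map_sum, Finset.sum_mul, Finset.mul_sum]
    refine Finset.sum_congr rfl fun i _ => ?_
    rw [show (B^p) i j = (B^p) j i from congrFun (congrFun hsym j) i]
  rw [h1, map_sum]
  have hC : ∀ (a : ℝ) (q : MvPolynomial (Fin d) ℝ), LL d (C a * q) = a * LL d q := fun a q => by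
    rw [← smul_eq_C_mul, map_smul, smul_eq_mul]
  simp_rw [LL_stein, h2, map_add, hC]
  rw [Finset.sum_add_distrib, ← Finset.sum_mul, ← Finset.mul_sum, ← map_sum, ← Finset.sum_mul, h3]
  rfl

open MvPolynomial in
lemma LL_iter {d : ℕ} (B : Matrix (Fin d) (Fin d) ℝ) (hB : Bᵀ = B) (r : ℝ) (n : ℕ) :
    ∀ p : ℕ, LL d (qf (B^p) * (qf B - C r)^n) = ∑ i ∈ Finset.range (n+1),
      (2:ℝ)^i * ((n.factorial : ℝ) / ((n-i).factorial : ℝ)) * (B^(p+i)).trace *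
        LL d ((qf B - C r)^(n-i)) := by
  induction n with
  | zero => intro p; rw [LL_rec B hB]; simp
  | succ n ih =>
    intro p
    rw [LL_rec B hB, Finset.sum_range_succ', add_comm]
    have hf : ((n+1).factorial : ℝ) ≠ 0 := by positivity
    congr 1
    · rw [Nat.add_sub_cancel, ih, Finset.mul_sum]
      refine Finset.sum_congr rfl fun i _ => ?_
      rw [show n + 1 - (i+1) = n - i by omega, show p + 1 + i = p + (i+1) by ring,
        Nat.factorial_succ]
      push_cast; ring
    · simp [hf]

lemma trace_pow_comm {d : ℕ} (X Y : Matrix (Fin d) (Fin d) ℝ) (j : ℕ) :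
    ((X * Y) ^ j).trace = ((Y * X) ^ j).trace := by
  have h : ∀ j : ℕ, (X * Y) ^ (j+1) = X * (Y * X) ^ j * Y := by
    intro j
    induction j with
    | zero => simp
    | succ j ih => rw [pow_succ, ih, pow_succ (Y * X)]; simp only [Matrix.mul_assoc]
  cases j with
  | zero => simp
  | succ j =>
    rw [h, Matrix.trace_mul_comm, ← Matrix.mul_assoc, ← pow_succ']

open MvPolynomial in
lemma moment_eq_GG {d : ℕ} (B : Matrix (Fin d) (Fin d) ℝ) (hB : Bᵀ = B) (n : ℕ) :
    LL d ((qf B - C B.trace)^n) = GG (fun j => (B^j).trace) n := by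
  induction n using Nat.strong_induction_on with
  | _ n ih =>
    cases n with
    | zero => rw [GG_zero, LL_apply]; simp
    | succ n =>
      have h := LL_iter B hB B.trace n 1
      have h0 : (n.factorial : ℝ) ≠ 0 := by positivity
      rw [Finset.sum_range_succ'] at h
      simp only [pow_zero, Nat.sub_zero, div_self h0, one_mul, add_zero, pow_one] at h
      rw [GG_succ, pow_succ', sub_mul, map_sub, h, ← smul_eq_C_mul, map_smul, smul_eq_mul,
        add_sub_cancel_right]
      refine Finset.sum_congr rfl fun i hi => ?_
      have hi := Finset.mem_range.1 hi
      rw [show n - (i+1) = n - 1 - i by omega, ih _ (by omega), show 1 + (i+1) = i + 2 by ring]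

theorem stmt12 {Ω : Type*} [MeasurableSpace Ω] (P : Measure Ω) [IsProbabilityMeasure P]
    {d : ℕ} (ξ : Ω → Fin d → ℝ) (C A : Matrix (Fin d) (Fin d) ℝ)
    (hC : C.PosSemidef) (hA : A.IsSymm)
    (hξ : IsCenteredGaussian P ξ C)
    (hint : ∀ k : ℕ, Integrable (fun ω => (ξ ω ⬝ᵥ A.mulVec (ξ ω)) ^ k) P)
    (N : ℕ) (hN : 1 ≤ N) :
    (∑ n ∈ Finset.range (N + 1),
        (N.choose n : ℝ) * (-1 : ℝ) ^ (N - n) *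
          (∫ ω, (ξ ω ⬝ᵥ A.mulVec (ξ ω)) ^ n ∂P) *
          (Matrix.trace (A * C)) ^ (N - n)) =
      ∑ m ∈ Finset.Icc 1 N,
        (2 : ℝ) ^ (N - m) *
          ∑ k ∈ J0 m N, cconst N k * ∏ j : Fin m, Matrix.trace ((A * C) ^ (k j)) := by
  obtain ⟨S, hS, hSC, hlaw⟩ := exists_law P ξ C hC hξ
  have hξm := hξ.1
  set B := S * (A * S) with hBdef
  have hB : Bᵀ = B := by
    rw [hBdef, transpose_mul, transpose_mul, hS, hA.eq, Matrix.mul_assoc]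
  have htr : ∀ j, ((A * C) ^ j).trace = (B ^ j).trace := by
    intro j
    rw [← hSC, ← Matrix.mul_assoc, trace_pow_comm]
  have htr1 : (A * C).trace = B.trace := by simpa using htr 1
  have hmom : ∀ n : ℕ, ∫ ω, (ξ ω ⬝ᵥ A.mulVec (ξ ω)) ^ n ∂P = LL d (qf B ^ n) := by
    intro n
    have hmeas : Measurable (fun x : Fin d → ℝ => (x ⬝ᵥ A *ᵥ x) ^ n) := by
      unfold dotProduct mulVec dotProduct; fun_prop
    have hmS : Measurable (fun x : Fin d → ℝ => S *ᵥ x) := by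
      unfold mulVec dotProduct; fun_prop
    rw [← integral_map (φ := ξ) (f := fun x : Fin d → ℝ => (x ⬝ᵥ A *ᵥ x) ^ n)
      hξm.aemeasurable hmeas.aestronglyMeasurable, hlaw,
      integral_map hmS.aemeasurable hmeas.aestronglyMeasurable, LL_apply]
    congr 1
    funext x
    rw [map_pow, eval_qf, hBdef]
    congr 1
    rw [← mulVec_mulVec, ← mulVec_mulVec, dotProduct_mulVec x S, ← mulVec_transpose, hS]
  have hR : ∑ m ∈ Finset.Icc 1 N, (2 : ℝ) ^ (N - m) *
      ∑ k ∈ J0 m N, cconst N k * ∏ j : Fin m, Matrix.trace ((A * C) ^ (k j)) =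
      GG (fun j => (B^j).trace) N := by
    have e : Finset.Icc 1 N = Finset.Ico (0+1) (N+1) := by ext; simp
    rw [GG, Finset.sum_range_succ', HH_zero_pos _ hN, mul_zero, add_zero, e,
      ← Finset.sum_Ico_add', Nat.Ico_zero_eq_range]
    simp only [HH, htr]
  rw [hR, ← moment_eq_GG B hB N, sub_eq_add_neg, add_pow, map_sum]
  refine Finset.sum_congr rfl fun n _ => ?_
  rw [hmom, htr1]
  rw [show qf B ^ n * (-MvPolynomial.C B.trace) ^ (N - n) * ((N.choose n : ℕ) : MvPolynomial (Fin d) ℝ)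
    = MvPolynomial.C ((-B.trace) ^ (N - n) * (N.choose n : ℝ)) * qf B ^ n by
      simp only [map_mul, map_pow, map_neg, map_natCast]; ring]
  rw [← MvPolynomial.smul_eq_C_mul, map_smul, smul_eq_mul, neg_pow B.trace]
  ring
end
end
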